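/- The explicit series Ψ₀ satisfies equation (21): Σ_{n≥0} Ψ₀^{2n}·(uv)^n/(2n)! + Σ_{n≥0} Ψ₀^{2n+1}·u^{n+1}·v^n/(2n+1)! = 1 + u. Consequently Ψ₀ is the unique solution of equation (21) in ℚ[[u,v]]. -/

import Mathlib

noncomputable section

abbrev R2 := MvPowerSeries (Fin 2) ℚ

def u : R2 := MvPowerSeries.X 0
def v : R2 := MvPowerSeries.X 1

def mdeg {n : ℕ} (m : Fin n →₀ ℕ) : ℕ := m.sum fun _ k => k

/-- Σ_{n≥0} Ψ^{2n}·(uv)^n/(2n)!  (coefficientwise finite sum) -/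
def S1 (P : R2) : R2 := fun m => ∑ n ∈ Finset.range (mdeg m + 1),
  MvPowerSeries.coeff (R := ℚ) m ((((2*n).factorial : ℚ))⁻¹ • (P ^ (2*n) * (u * v) ^ n))

/-- Σ_{n≥0} Ψ^{2n+1}·u^{n+1}·v^n/(2n+1)!  (coefficientwise finite sum) -/
def S2 (P : R2) : R2 := fun m => ∑ n ∈ Finset.range (mdeg m + 1),
  MvPowerSeries.coeff (R := ℚ) m ((((2*n+1).factorial : ℚ))⁻¹ • (P ^ (2*n+1) * u ^ (n+1) * v ^ n))

/-- equation (21): cosh(Ψ√(uv)) + √(u/v)·sinh(Ψ√(uv)) = 1 + u, expanded -/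
def Eq21 (P : R2) : Prop := S1 P + S2 P = 1 + u

/-- generalized binomial coefficient C(−1/2, n) = (−1)ⁿ (2n choose n)/4ⁿ -/
def cb (n : ℕ) : ℚ := (-1)^n * (Nat.choose (2*n) n : ℚ) / 4^n

/-- Ψ₀ = Σ_{p,q} C(−1/2,p) C(−1/2,q) u^p v^q (u+2)^{p+q+1}/(2(p+q+1))
(coefficientwise finite sum). -/
def Psi0 : R2 := fun m =>
  ∑ p ∈ Finset.range (mdeg m + 1), ∑ q ∈ Finset.range (mdeg m + 1),
    MvPowerSeries.coeff (R := ℚ) m ((cb p * cb q / (2*(p+q+1))) • (u ^ p * v ^ q * (u + 2) ^ (p+q+1)))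

open scoped MvPowerSeries.WithPiTopology
open MvPowerSeries

theorem mdeg_eq_degree {n : ℕ} (m : Fin n →₀ ℕ) : mdeg m = m.degree := rfl

/-- A family of power series whose orders tend to infinity is summable, and the coefficients of
its sum are finite sums. -/
theorem hasSum_of_le_order {ι : Type*} (deg : ι → ℕ) (s : ℕ → Finset ι)
    (hs : ∀ n i, i ∉ s n → n < deg i) {t : ι → R2} (ht : ∀ i, (deg i : ℕ∞) ≤ (t i).order)
    {a : R2} (ha : ∀ m, coeff m a = ∑ i ∈ s (mdeg m), coeff m (t i)) : HasSum t a := by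
  rw [WithPiTopology.hasSum_iff_hasSum_coeff]
  intro m
  rw [ha]
  refine hasSum_sum_of_ne_finset_zero fun i hi => coeff_of_lt_order ?_
  refine lt_of_lt_of_le ?_ (ht i)
  exact_mod_cast hs _ _ hi

theorem hasSum_nat_of_le_order {t : ℕ → R2} (ht : ∀ n : ℕ, (n : ℕ∞) ≤ (t n).order) {a : R2}
    (ha : ∀ m, coeff m a = ∑ n ∈ Finset.range (mdeg m + 1), coeff m (t n)) : HasSum t a :=
  hasSum_of_le_order (fun n => n) (fun n => Finset.range (n + 1)) (by simp) ht ha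

theorem summable_nat_of_le_order {t : ℕ → R2} (ht : ∀ n : ℕ, (n : ℕ∞) ≤ (t n).order) :
    Summable t :=
  ⟨fun m => ∑ n ∈ Finset.range (mdeg m + 1), coeff m (t n),
    hasSum_nat_of_le_order ht fun _ => rfl⟩

theorem hasSum_prod_of_le_order {t : ℕ × ℕ → R2}
    (ht : ∀ i, ((i.1 + i.2 : ℕ) : ℕ∞) ≤ (t i).order) {a : R2}
    (ha : ∀ m, coeff m a = ∑ p ∈ Finset.range (mdeg m + 1), ∑ q ∈ Finset.range (mdeg m + 1),
      coeff m (t (p, q))) : HasSum t a :=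
  hasSum_of_le_order (fun i : ℕ × ℕ => i.1 + i.2)
    (fun n => Finset.range (n + 1) ×ˢ Finset.range (n + 1))
    (by intro n i hi; simp only [Finset.mem_product, Finset.mem_range] at hi; omega) ht
    (by simpa only [Finset.sum_product] using ha)

theorem summable_prod_of_le_order {t : ℕ × ℕ → R2}
    (ht : ∀ i, ((i.1 + i.2 : ℕ) : ℕ∞) ≤ (t i).order) : Summable t :=
  ⟨fun m => ∑ p ∈ Finset.range (mdeg m + 1), ∑ q ∈ Finset.range (mdeg m + 1), coeff m (t (p, q)),
    hasSum_prod_of_le_order ht fun _ => rfl⟩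

theorem hasSum_of_eq {ι : Type*} {f g : ι → R2} {a : R2} (hg : HasSum g a)
    (h : ∀ i, f i = g i) : HasSum f a :=
  (funext h : f = g) ▸ hg

theorem dvd_rat_smul {a b : R2} (h : a ∣ b) (c : ℚ) : a ∣ c • b := by
  rw [smul_eq_C_mul]
  exact h.mul_left _

theorem order_le_of_dvd {a b : R2} (h : a ∣ b) : a.order ≤ b.order := by
  obtain ⟨c, rfl⟩ := h
  exact le_self_add.trans le_order_mul

theorem le_order_of_pow_dvd {z b : R2} {n : ℕ} (hz : constantCoeff z = 0) (h : z ^ n ∣ b) :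
    (n : ℕ∞) ≤ b.order :=
  (le_order_pow_of_constantCoeff_eq_zero n hz).trans (order_le_of_dvd h)

theorem le_order_of_pow_mul_pow_dvd {y z b : R2} {p q : ℕ} (hy : constantCoeff y = 0)
    (hz : constantCoeff z = 0) (h : y ^ p * z ^ q ∣ b) : ((p + q : ℕ) : ℕ∞) ≤ b.order := by
  push_cast
  exact (add_le_add (le_order_pow_of_constantCoeff_eq_zero p hy)
    (le_order_pow_of_constantCoeff_eq_zero q hz)).trans (le_order_mul.trans (order_le_of_dvd h))

theorem constantCoeff_u : constantCoeff u = 0 := constantCoeff_X _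

theorem constantCoeff_v : constantCoeff v = 0 := constantCoeff_X _

/-- The Euler derivation `u ∂/∂u + v ∂/∂v`, multiplying each monomial by its degree. -/
def euler : Derivation ℚ R2 R2 :=
  Derivation.mk'
    { toFun := fun h m => (mdeg m : ℚ) * coeff m h
      map_add' := fun a b => by
        ext m
        change (mdeg m : ℚ) * coeff m (a + b) = mdeg m * coeff m a + mdeg m * coeff m b
        rw [map_add, mul_add]
      map_smul' := fun c a => by
        ext m
        change (mdeg m : ℚ) * coeff m (c • a) = c * (mdeg m * coeff m a)
        rw [map_smul, smul_eq_mul]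
        ring }
    (fun a b => by
      ext m
      rw [map_add, smul_eq_mul, smul_eq_mul, mul_comm b, coeff_mul, coeff_mul]
      change (mdeg m : ℚ) * coeff m (a * b) = _
      rw [coeff_mul, Finset.mul_sum, ← Finset.sum_add_distrib]
      refine Finset.sum_congr rfl fun i hi => ?_
      change _ = coeff i.1 a * (mdeg i.2 * coeff i.2 b) + mdeg i.1 * coeff i.1 a * coeff i.2 b
      rw [← Finset.HasAntidiagonal.mem_antidiagonal.mp hi, mdeg_eq_degree, mdeg_eq_degree, mdeg_eq_degree, map_add]
      push_cast
      ring)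

theorem coeff_euler (m : Fin 2 →₀ ℕ) (h : R2) : coeff m (euler h) = mdeg m * coeff m h := rfl

theorem euler_X (i : Fin 2) : euler (X i) = X i := by
  ext m
  rw [coeff_euler, coeff_X]
  split_ifs with h
  · simp [h, mdeg_eq_degree]
  · simp

theorem euler_u : euler u = u := euler_X _

theorem euler_v : euler v = v := euler_X _

theorem euler_pow_succ (a : R2) (n : ℕ) : euler (a ^ (n + 1)) = (n + 1) * a ^ n * euler a := by
  rw [Derivation.leibniz_pow]
  simp [mul_assoc]

theorem euler_pow_of_euler_eq_mul {a c : R2} (h : euler a = c * a) (n : ℕ) :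
    euler (a ^ n) = n * c * a ^ n := by
  cases n with
  | zero => simp
  | succ n =>
    rw [euler_pow_succ, h]
    push_cast
    ring

theorem hasSum_euler {ι : Type*} {t : ι → R2} {a : R2} (h : HasSum t a) :
    HasSum (fun i => euler (t i)) (euler a) := by
  rw [WithPiTopology.hasSum_iff_hasSum_coeff] at h ⊢
  intro m
  simp only [coeff_euler]
  exact (h m).mul_left _

theorem order_euler_le {h : R2} (h0 : constantCoeff h = 0) : (euler h).order ≤ h.order := by
  refine le_order fun d hd => ?_
  have hc := coeff_of_lt_order hd
  rw [coeff_euler, mul_eq_zero] at hc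
  rcases hc with hc | hc
  · have : d = 0 := by
      rw [mdeg_eq_degree] at hc
      exact (Finsupp.degree_eq_zero_iff d).mp (by exact_mod_cast hc)
    rw [this]
    simpa using h0
  · exact hc

/-- A homogeneous linear Euler system with topologically nilpotent coefficients has only the
trivial solution with zero constant terms. -/
theorem eq_zero_of_euler_system {a b c d : R2} (hc : constantCoeff c = 0)
    (hd : constantCoeff d = 0) (ha0 : constantCoeff a = 0) (hb0 : constantCoeff b = 0)
    (ha : euler a = c * b) (hb : euler b = d * a) : a = 0 := by
  have key : ∀ {x y z : R2}, constantCoeff z = 0 → constantCoeff x = 0 → euler x = z * y →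
      1 + y.order ≤ x.order := by
    intro x y z hz hx hxy
    calc 1 + y.order ≤ z.order + y.order := by
          gcongr
          exact one_le_order_iff_constCoeff_eq_zero.mpr hz
      _ ≤ (z * y).order := le_order_mul
      _ = (euler x).order := by rw [hxy]
      _ ≤ x.order := order_euler_le hx
  have h1 := key hc ha0 ha
  have h2 := key hd hb0 hb
  rw [← order_eq_top_iff]
  generalize a.order = m at *
  generalize b.order = n at *
  induction m with
  | top => rfl
  | coe m =>
    induction n with
    | top => simp at h1
    | coe n =>
      norm_cast at h1 h2
      omega

theorem eq_of_euler_eq_zero {a : R2} (h : euler a = 0) : a = C (constantCoeff a) := by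
  have : a - C (constantCoeff a) = 0 := by
    refine eq_zero_of_euler_system (b := 0) (c := 0) (d := 0) (by simp) (by simp) (by simp)
      (by simp) ?_ (by simp)
    have hC : euler (C (constantCoeff a)) = 0 := euler.map_algebraMap _
    rw [map_sub, h, hC]
    simp
  exact sub_eq_zero.mp this

theorem succ_mul_cb_succ (n : ℕ) : (n + 1) * cb (n + 1) + n * cb n = -(1 / 2) * cb n := by
  have h : ((n : ℚ) + 1) * ((2 * (n + 1)).choose (n + 1) : ℚ)
      = 2 * (2 * n + 1) * ((2 * n).choose n : ℚ) := by
    exact_mod_cast Nat.succ_mul_centralBinom_succ n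
  unfold cb
  have : ((n : ℚ) + 1) * ((-1) ^ (n + 1) * ((2 * (n + 1)).choose (n + 1) : ℚ) / 4 ^ (n + 1))
      = (-1) ^ (n + 1) / 4 ^ (n + 1) * (2 * (2 * n + 1) * ((2 * n).choose n : ℚ)) := by
    rw [← h]
    ring
  rw [this]
  field_simp
  ring

/-- The series `(1 + z) ^ (-1/2)`. -/
def invSqrt (z : R2) : R2 := ∑' n, cb n • z ^ n

theorem hasSum_invSqrt {z : R2} (hz : constantCoeff z = 0) :
    HasSum (fun n => cb n • z ^ n) (invSqrt z) :=
  (summable_nat_of_le_order fun _ =>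
    le_order_of_pow_dvd hz (dvd_rat_smul (dvd_refl _) _)).hasSum

theorem constantCoeff_invSqrt {z : R2} (hz : constantCoeff z = 0) :
    constantCoeff (invSqrt z) = 1 := by
  have h := (hasSum_invSqrt hz).map (constantCoeff (σ := Fin 2) (R := ℚ))
    (WithPiTopology.continuous_constantCoeff ℚ)
  refine h.unique ?_
  convert hasSum_single (0 : ℕ) (f := (constantCoeff (σ := Fin 2) (R := ℚ)) ∘ _) ?_ using 1
  · simp [cb]
  · intro n hn
    simp [hz, hn]

theorem euler_invSqrt {z : R2} (hz : constantCoeff z = 0) :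
    2 * (1 + z) * euler (invSqrt z) = -(invSqrt z * euler z) := by
  have h := hasSum_euler (hasSum_invSqrt hz)
  have hshift := (hasSum_nat_add_iff' 1).mpr h
  have h1 := (hshift.add (h.mul_left z)).mul_left 2
  have h2 := ((hasSum_invSqrt hz).mul_right (euler z)).neg
  have : (fun n => 2 * (euler (cb (n + 1) • z ^ (n + 1)) + z * euler (cb n • z ^ n)))
      = fun n => -(cb n • z ^ n * euler z) := by
    funext n
    have hz' : z * euler (z ^ n) = n * z ^ n * euler z := by
      cases n with
      | zero => simp
      | succ n =>
        rw [euler_pow_succ]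
        push_cast
        ring
    rw [Derivation.map_smul, Derivation.map_smul, euler_pow_succ, mul_smul_comm, hz']
    have hcb := congrArg (C (σ := Fin 2)) (succ_mul_cb_succ n)
    have h2 : (2 : R2) * C (-(1 / 2) : ℚ) = -1 := by
      rw [show (2 : R2) = C (2 : ℚ) from (map_ofNat _ 2).symm, ← map_mul]
      norm_num
    simp only [map_add, map_mul, map_natCast, map_one] at hcb
    simp only [smul_eq_C_mul]
    linear_combination (2 * z ^ n * euler z) * hcb + (C (cb n) * z ^ n * euler z) * h2
  rw [this] at h1
  have h3 := h1.unique h2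
  simp only [Finset.range_one, Finset.sum_singleton, pow_zero, Derivation.map_smul,
    Derivation.map_one_eq_zero, smul_zero, sub_zero] at h3
  linear_combination h3

theorem one_add_mul_invSqrt_sq {z : R2} (hz : constantCoeff z = 0) :
    (1 + z) * invSqrt z ^ 2 = 1 := by
  have h : euler ((1 + z) * invSqrt z ^ 2) = 0 := by
    rw [Derivation.leibniz, smul_eq_mul, smul_eq_mul, euler_pow_succ _ 1, map_add,
      Derivation.map_one_eq_zero]
    push_cast
    linear_combination invSqrt z * euler_invSqrt hz
  rw [eq_of_euler_eq_zero h]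
  simp [hz, constantCoeff_invSqrt hz]

theorem invSqrt_sq_sub_one {a : R2} (ha : constantCoeff a = 0) :
    (1 + a) * invSqrt (a * (a + 2)) = 1 := by
  have hz : constantCoeff (a * (a + 2)) = 0 := by simp [ha]
  have h := one_add_mul_invSqrt_sq hz
  have hsq : ((1 + a) * invSqrt (a * (a + 2))) ^ 2 = 1 := by linear_combination h
  rcases sq_eq_one_iff.mp hsq with h | h
  · exact h
  · have := congrArg constantCoeff h
    simp [ha, constantCoeff_invSqrt hz] at this
    norm_num at this

theorem hasSum_Psi0 : HasSum (fun i : ℕ × ℕ => (cb i.1 * cb i.2 / (2 * (i.1 + i.2 + 1))) •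
    (u ^ i.1 * v ^ i.2 * (u + 2) ^ (i.1 + i.2 + 1))) Psi0 :=
  hasSum_prod_of_le_order (fun _ => le_order_of_pow_mul_pow_dvd constantCoeff_u constantCoeff_v
    (dvd_rat_smul (dvd_mul_right _ _) _)) fun _ => rfl

theorem euler_Psi0 : euler Psi0 + Psi0 = invSqrt (v * (u + 2)) := by
  have hX : constantCoeff (u * (u + 2)) = 0 := by simp [constantCoeff_u]
  have hY : constantCoeff (v * (u + 2)) = 0 := by simp [constantCoeff_v]
  have hprod := ((hasSum_invSqrt hX).mul (hasSum_invSqrt hY)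
    (summable_prod_of_le_order fun i => le_order_of_pow_mul_pow_dvd hX hY
      (mul_dvd_mul (dvd_rat_smul (dvd_refl _) _)
        (dvd_rat_smul (dvd_refl _) _)))).mul_left (1 + u)
  have hsum := (hasSum_euler hasSum_Psi0).add hasSum_Psi0
  have hterm : ∀ p q : ℕ, euler (u ^ p * v ^ q * (u + 2) ^ (p + q + 1))
      + u ^ p * v ^ q * (u + 2) ^ (p + q + 1)
      = (2 * (p + q + 1) : ℚ) • ((1 + u) * ((u * (u + 2)) ^ p * (v * (u + 2)) ^ q)) := by
    intro p q
    have h2 : euler (u + 2) = u := by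
      rw [map_add, euler_u, show (2 : R2) = ((2 : ℕ) : R2) by norm_num, Derivation.map_natCast,
        add_zero]
    have hu := euler_pow_of_euler_eq_mul (a := u) (c := 1) (by rw [euler_u, one_mul]) p
    have hv := euler_pow_of_euler_eq_mul (a := v) (c := 1) (by rw [euler_v, one_mul]) q
    rw [Derivation.leibniz, Derivation.leibniz, euler_pow_succ, hu, hv, h2, mul_pow, mul_pow]
    simp only [smul_eq_mul, smul_eq_C_mul, map_mul, map_add, map_natCast, map_one, map_ofNat]
    push_cast
    ring
  have : (fun i : ℕ × ℕ => euler ((cb i.1 * cb i.2 / (2 * (i.1 + i.2 + 1))) •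
      (u ^ i.1 * v ^ i.2 * (u + 2) ^ (i.1 + i.2 + 1)))
      + (cb i.1 * cb i.2 / (2 * (i.1 + i.2 + 1))) •
      (u ^ i.1 * v ^ i.2 * (u + 2) ^ (i.1 + i.2 + 1)))
      = fun i => (1 + u) * (cb i.1 • (u * (u + 2)) ^ i.1 * cb i.2 • (v * (u + 2)) ^ i.2) := by
    funext i
    rw [Derivation.map_smul, ← smul_add, hterm, smul_smul, div_mul_cancel₀ _ (by positivity),
      smul_mul_smul_comm, mul_smul_comm]
  rw [this] at hsum
  rw [hsum.unique hprod, ← mul_assoc, invSqrt_sq_sub_one constantCoeff_u, one_mul]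

theorem constantCoeff_uv : constantCoeff (u * v) = 0 := by simp [constantCoeff_u]

theorem hasSum_S1 (P : R2) :
    HasSum (fun n => (((2 * n).factorial : ℚ))⁻¹ • (P ^ (2 * n) * (u * v) ^ n)) (S1 P) :=
  hasSum_nat_of_le_order (fun _ => le_order_of_pow_dvd constantCoeff_uv
    (dvd_rat_smul (dvd_mul_left _ _) _)) fun _ => rfl

theorem hasSum_S2 (P : R2) :
    HasSum (fun n => (((2 * n + 1).factorial : ℚ))⁻¹ • (P ^ (2 * n + 1) * u ^ (n + 1) * v ^ n))
      (S2 P) :=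
  hasSum_nat_of_le_order (fun n => le_order_of_pow_dvd constantCoeff_uv
    (dvd_rat_smul ⟨P ^ (2 * n + 1) * u, by ring⟩ _)) fun _ => rfl

/-- The series `sinh (P √(uv)) / √(uv)`. -/
def sinhQuot (P : R2) : R2 :=
  ∑' n, (((2 * n + 1).factorial : ℚ))⁻¹ • (P ^ (2 * n + 1) * (u * v) ^ n)

theorem hasSum_sinhQuot (P : R2) :
    HasSum (fun n => (((2 * n + 1).factorial : ℚ))⁻¹ • (P ^ (2 * n + 1) * (u * v) ^ n))
      (sinhQuot P) :=
  (summable_nat_of_le_order fun _ => le_order_of_pow_dvd constantCoeff_uv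
    (dvd_rat_smul (dvd_mul_left _ _) _)).hasSum

theorem S2_eq (P : R2) : S2 P = u * sinhQuot P := by
  refine (hasSum_S2 P).unique ?_
  refine hasSum_of_eq ((hasSum_sinhQuot P).mul_left u) fun n => ?_
  rw [mul_smul_comm]
  congr 1
  ring

theorem euler_uv_pow (n : ℕ) : euler ((u * v) ^ n) = n * 2 * (u * v) ^ n := by
  refine euler_pow_of_euler_eq_mul ?_ n
  rw [Derivation.leibniz, euler_u, euler_v, smul_eq_mul, smul_eq_mul]
  ring

theorem euler_S1 (P : R2) : euler (S1 P) = u * v * (euler P + P) * sinhQuot P := by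
  have h := (hasSum_nat_add_iff' 1).mpr (hasSum_euler (hasSum_S1 P))
  have h0 : euler (S1 P) - ∑ n ∈ Finset.range 1,
      euler ((((2 * n).factorial : ℚ))⁻¹ • (P ^ (2 * n) * (u * v) ^ n)) = euler (S1 P) := by
    simp
  rw [h0] at h
  refine h.unique ?_
  refine hasSum_of_eq ((hasSum_sinhQuot P).mul_left (u * v * (euler P + P))) fun n => ?_
  have hfac : (((2 * (n + 1)).factorial : ℚ))⁻¹ * (2 * n + 2) = (((2 * n + 1).factorial : ℚ))⁻¹ := by
    rw [show 2 * (n + 1) = (2 * n + 1) + 1 by ring, Nat.factorial_succ]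
    push_cast
    field_simp
    ring
  rw [Derivation.map_smul, ← hfac, mul_smul, mul_smul_comm, mul_smul_comm, Derivation.leibniz, euler_uv_pow,
    show 2 * (n + 1) = (2 * n + 1) + 1 by ring, euler_pow_succ]
  congr 1
  simp only [smul_eq_mul, smul_eq_C_mul, map_mul, map_add, map_natCast, map_ofNat]
  push_cast
  ring

theorem euler_sinhQuot (P : R2) :
    euler (sinhQuot P) + sinhQuot P = (euler P + P) * S1 P := by
  refine ((hasSum_euler (hasSum_sinhQuot P)).add (hasSum_sinhQuot P)).unique ?_
  refine hasSum_of_eq ((hasSum_S1 P).mul_left (euler P + P)) fun n => ?_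
  have hfac : (((2 * n + 1).factorial : ℚ))⁻¹ * (2 * n + 1) = (((2 * n).factorial : ℚ))⁻¹ := by
    rw [Nat.factorial_succ]
    push_cast
    field_simp
  rw [Derivation.map_smul, ← hfac, mul_smul, mul_smul_comm, ← smul_add, mul_smul_comm, Derivation.leibniz,
    euler_uv_pow, euler_pow_succ]
  congr 1
  simp only [smul_eq_mul, smul_eq_C_mul, map_mul, map_add, map_natCast, map_ofNat, map_one]
  push_cast
  ring

theorem constantCoeff_S1 (P : R2) : constantCoeff (S1 P) = 1 := by
  rw [← coeff_zero_eq_constantCoeff_apply]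
  change ∑ n ∈ Finset.range (mdeg (0 : Fin 2 →₀ ℕ) + 1),
    coeff 0 ((((2 * n).factorial : ℚ))⁻¹ • (P ^ (2 * n) * (u * v) ^ n)) = 1
  simp [mdeg]

theorem eq21_Psi0 : Eq21 Psi0 := by
  have hY : constantCoeff (v * (u + 2)) = 0 := by simp [constantCoeff_v]
  set β := invSqrt (v * (u + 2)) with hβ
  have hG := euler_Psi0
  have hC := euler_S1 Psi0
  have hS := euler_sinhQuot Psi0
  have hβ2 := one_add_mul_invSqrt_sq hY
  have hEY : euler (v * (u + 2)) = 2 * v * (1 + u) := by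
    rw [Derivation.leibniz, map_add, euler_u, euler_v, show (2 : R2) = ((2 : ℕ) : R2) by norm_num,
      Derivation.map_natCast, smul_eq_mul, smul_eq_mul]
    push_cast
    ring
  have hEβ := euler_invSqrt hY
  rw [← hβ] at hG hβ2 hEβ
  rw [hG] at hC hS
  rw [hEY] at hEβ
  rw [Eq21, S2_eq, ← sub_eq_zero]
  refine eq_zero_of_euler_system (c := u * β) (d := v * β)
    (b := S1 Psi0 + v * sinhQuot Psi0 - (1 + v * (u + 2)) * β) ?_ ?_ ?_ ?_ ?_ ?_
  · simp [constantCoeff_u]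
  · simp [constantCoeff_v]
  · simp [constantCoeff_u, constantCoeff_S1]
  · simp [constantCoeff_v, constantCoeff_S1, hβ, constantCoeff_invSqrt hY]
  · simp only [map_sub, map_add, Derivation.leibniz, Derivation.map_one_eq_zero, euler_u,
      smul_eq_mul]
    linear_combination hC + u * hS + u * hβ2
  · have hEB : euler ((1 + v * (u + 2)) * β) = v * β * (1 + u) := by
      rw [Derivation.leibniz, map_add, hEY, Derivation.map_one_eq_zero, smul_eq_mul, smul_eq_mul]
      have : (2 : R2) * ((1 + v * (u + 2)) * euler β + β * (0 + 2 * v * (1 + u)))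
          = 2 * (v * β * (1 + u)) := by
        linear_combination hEβ
      refine mul_left_cancel₀ (fun h => ?_) this
      have := congrArg constantCoeff h
      rw [map_ofNat, map_zero] at this
      norm_num at this
    rw [map_sub, hEB]
    simp only [map_add, Derivation.leibniz, euler_v, smul_eq_mul]
    linear_combination hC + v * hS

theorem eq_of_eq21 {P Q : R2} (hP : Eq21 P) (hQ : Eq21 Q) : P = Q := by
  let g : ℕ → R2 := fun k => ∑ i ∈ Finset.range k, P ^ i * Q ^ (k - 1 - i)
  have hg : ∀ k, P ^ k - Q ^ k = g k * (P - Q) := fun k => (Commute.all P Q).geom_sum₂_mul k |>.symm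
  let t : ℕ → R2 := fun n => (((2 * (n + 1)).factorial : ℚ))⁻¹ • (g (2 * (n + 1)) * (u * v) ^ n)
    + (((2 * (n + 1) + 1).factorial : ℚ))⁻¹ • (g (2 * (n + 1) + 1) * (u * (u * v) ^ n))
  obtain ⟨H, hH⟩ : Summable t := summable_nat_of_le_order fun n =>
    le_order_of_pow_dvd constantCoeff_uv (dvd_add (dvd_rat_smul (dvd_mul_left _ _) _)
      (dvd_rat_smul ((dvd_mul_left _ _).mul_left _) _))
  have hsum := (hasSum_nat_add_iff' 1).mpr
    (((hasSum_S1 P).add (hasSum_S2 P)).sub ((hasSum_S1 Q).add (hasSum_S2 Q)))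
  have hzero := hsum.unique (a₂ := u * v * (P - Q) * H) (by
    refine hasSum_of_eq (hH.mul_left (u * v * (P - Q))) fun n => ?_
    simp only [t, smul_eq_C_mul]
    linear_combination
      (C ((((2 * (n + 1)).factorial : ℚ))⁻¹) * (u * v) ^ (n + 1)) * hg (2 * (n + 1))
      + (C ((((2 * (n + 1) + 1).factorial : ℚ))⁻¹) * u ^ (n + 1 + 1) * v ^ (n + 1))
        * hg (2 * (n + 1) + 1))
  rw [Eq21] at hP hQ
  rw [hP, hQ] at hzero
  simp at hzero
  have hu : u ≠ 0 := by
    intro h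
    have := congrArg (coeff (Finsupp.single 0 1)) h
    rw [u, coeff_index_single_self_X] at this
    simp at this
  have hunit : 1 + v * H ≠ 0 := by
    intro h
    have := congrArg constantCoeff h
    simp [constantCoeff_v] at this
  have hfac : u * (1 + v * H) * (P - Q) = 0 := by linear_combination -hzero
  exact sub_eq_zero.mp ((mul_eq_zero.mp hfac).resolve_left (mul_ne_zero hu hunit))

theorem stmt3 : Eq21 Psi0 ∧ ∀ P : R2, Eq21 P → P = Psi0 :=
  ⟨eq21_Psi0, fun _ hP => eq_of_eq21 hP eq21_Psi0⟩
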